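/- Let 1 < p < ∞ and let f ∈ L^p([0,1]²) satisfy I_p(f) < ∞. Then there exist a continuous function g ∈ L^p_0([0,1]²) and univariate functions φ₁, φ₂ such that f(x,y) = g(x,y) + φ₁(x) + φ₂(y) for almost every (x,y) ∈ ℝ². -/

import Mathlib

open MeasureTheory Filter Set
open scoped ENNReal

noncomputable section

/-- A function of two real variables that is 1-periodic in each variable. -/
def BiPeriodic (f : ℝ → ℝ → ℝ) : Prop :=
  (∀ x y, f (x + 1) y = f x y) ∧ (∀ x y, f x (y + 1) = f x y)

/-- A 1-periodic function of one real variable. -/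
def Periodic1 (g : ℝ → ℝ) : Prop := ∀ x, g (x + 1) = g x

/-- The `L^p` norm of a function over `[0,1]^2` (as a value in `[0,∞]`). -/
noncomputable def lpNorm2 (p : ℝ) (f : ℝ → ℝ → ℝ) : ℝ≥0∞ :=
  (∫⁻ x in Set.Icc (0:ℝ) 1, ∫⁻ y in Set.Icc (0:ℝ) 1,
      ENNReal.ofReal (|f x y| ^ p)) ^ (1 / p)

/-- The `L^p` norm of a function over `[0,1]` (as a value in `[0,∞]`). -/
noncomputable def lpNorm1 (p : ℝ) (g : ℝ → ℝ) : ℝ≥0∞ :=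
  (∫⁻ x in Set.Icc (0:ℝ) 1, ENNReal.ofReal (|g x| ^ p)) ^ (1 / p)

/-- Membership in `L^p([0,1]^2)`: measurable, 1-periodic in each variable,
finite `L^p` norm. -/
def MemLp2 (p : ℝ) (f : ℝ → ℝ → ℝ) : Prop :=
  Measurable (Function.uncurry f) ∧ BiPeriodic f ∧ lpNorm2 p f < ⊤

/-- Membership in `L^p([0,1])` for 1-periodic functions of one variable. -/
def MemLp1 (p : ℝ) (g : ℝ → ℝ) : Prop :=
  Measurable g ∧ Periodic1 g ∧ lpNorm1 p g < ⊤

/-- The (total) `L^p` modulus of continuity `ω(f;δ)_p` of a bivariate function. -/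
noncomputable def modulus2 (p : ℝ) (f : ℝ → ℝ → ℝ) (δ : ℝ) : ℝ≥0∞ :=
  ⨆ (h : ℝ × ℝ) (_ : Real.sqrt (h.1 ^ 2 + h.2 ^ 2) ≤ δ),
    lpNorm2 p (fun x y => f (x + h.1) (y + h.2) - f x y)

/-- The `L^p` modulus of continuity `ω(g;δ)_p` of a univariate function. -/
noncomputable def modulus1 (p : ℝ) (g : ℝ → ℝ) (δ : ℝ) : ℝ≥0∞ :=
  ⨆ (h : ℝ) (_ : h ∈ Set.Icc 0 δ), lpNorm1 p (fun x => g (x + h) - g x)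

/-- The mixed `L^p` modulus of continuity `ω(f;u,v)_p`. -/
noncomputable def mixedModulus (p : ℝ) (f : ℝ → ℝ → ℝ) (u v : ℝ) : ℝ≥0∞ :=
  ⨆ (s : ℝ) (_ : s ∈ Set.Icc 0 u) (t : ℝ) (_ : t ∈ Set.Icc 0 v),
    lpNorm2 p (fun x y => f (x + s) (y + t) - f (x + s) y - f x (y + t) + f x y)

/-- `J_p(f) = ∫₀¹ t^{-1/p} ω(f;t)_p dt/t`. -/
noncomputable def Jp (p : ℝ) (f : ℝ → ℝ → ℝ) : ℝ≥0∞ :=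
  ∫⁻ t in Set.Ioc (0:ℝ) 1, ENNReal.ofReal (t ^ (-(1/p)) / t) * modulus2 p f t

/-- `K_p(f) = ∫₀¹ t^{-1/p} [ω(f;t,1)_p + ω(f;1,t)_p] dt/t`. -/
noncomputable def Kp (p : ℝ) (f : ℝ → ℝ → ℝ) : ℝ≥0∞ :=
  ∫⁻ t in Set.Ioc (0:ℝ) 1,
    ENNReal.ofReal (t ^ (-(1/p)) / t) * (mixedModulus p f t 1 + mixedModulus p f 1 t)

/-- `I_p(f) = ∫₀¹∫₀¹ (uv)^{-1/p} ω(f;u,v)_p (du/u)(dv/v)`. -/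
noncomputable def Ip (p : ℝ) (f : ℝ → ℝ → ℝ) : ℝ≥0∞ :=
  ∫⁻ u in Set.Ioc (0:ℝ) 1, ∫⁻ v in Set.Ioc (0:ℝ) 1,
    ENNReal.ofReal ((u * v) ^ (-(1/p)) / (u * v)) * mixedModulus p f u v

/-- The essential supremum norm of `f` over `[0,1]^2`. -/
noncomputable def supNorm2 (f : ℝ → ℝ → ℝ) : ℝ≥0∞ :=
  essSup (fun z : ℝ × ℝ => ENNReal.ofReal |f z.1 z.2|)
    (volume.restrict ((Set.Icc (0:ℝ) 1) ×ˢ (Set.Icc (0:ℝ) 1)))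

/-- The Wiener `p`-variation of a 1-periodic function `g`, as a value in `[0,∞]`:
the supremum over partitions `x₀ < x₁ < ... < xₙ = x₀ + 1` of
`(∑ |g(x_{k+1}) - g(x_k)|^p)^{1/p}`. -/
noncomputable def vp (p : ℝ) (g : ℝ → ℝ) : ℝ≥0∞ :=
  ⨆ (n : ℕ) (x : ℕ → ℝ) (_ : ∀ i < n, x i < x (i + 1)) (_ : x n = x 0 + 1),
    ENNReal.ofReal ((∑ k ∈ Finset.range n, |g (x (k + 1)) - g (x k)| ^ p) ^ (1 / p))

/-- The Hardy–Vitali type total `p`-variation of a bivariate function,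
as a value in `[0,∞]`: the supremum over nets of
`(∑∑ |Δf(x_i,y_j)|^p)^{1/p}`. -/
noncomputable def vp2 (p : ℝ) (f : ℝ → ℝ → ℝ) : ℝ≥0∞ :=
  ⨆ (m : ℕ) (n : ℕ) (x : ℕ → ℝ) (y : ℕ → ℝ)
    (_ : ∀ i < m, x i < x (i + 1)) (_ : x m = x 0 + 1)
    (_ : ∀ j < n, y j < y (j + 1)) (_ : y n = y 0 + 1),
    ENNReal.ofReal ((∑ i ∈ Finset.range m, ∑ j ∈ Finset.range n,
      |f (x (i + 1)) (y (j + 1)) - f (x (i + 1)) (y j)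
        - f (x i) (y (j + 1)) + f (x i) (y j)| ^ p) ^ (1 / p))

/-- Membership in the Hardy class `H_p^{(2)}`: finite Vitali `p`-variation and
all linear sections of bounded `p`-variation. -/
def MemHp2 (p : ℝ) (f : ℝ → ℝ → ℝ) : Prop :=
  vp2 p f < ⊤ ∧ (∀ x, vp p (fun y => f x y) < ⊤) ∧ (∀ y, vp p (fun x => f x y) < ⊤)

/-- Membership in the mixed norm class `V_p[V_p]`: all sections have bounded
`p`-variation and the functions `x ↦ v_p(f_x)`, `y ↦ v_p(f_y)` are themselves
of bounded `p`-variation. -/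
def MemVpVp (p : ℝ) (f : ℝ → ℝ → ℝ) : Prop :=
  (∀ x, vp p (fun y => f x y) < ⊤) ∧ (∀ y, vp p (fun x => f x y) < ⊤) ∧
  vp p (fun x => (vp p (fun y => f x y)).toReal) < ⊤ ∧
  vp p (fun y => (vp p (fun x => f x y)).toReal) < ⊤

/-- `W_p(f) = v_p(φ_p[f]) + v_p(ψ_p[f])`, where `φ_p[f](x) = v_p(f_x)` and
`ψ_p[f](y) = v_p(f_y)`. -/
noncomputable def Wp (p : ℝ) (f : ℝ → ℝ → ℝ) : ℝ≥0∞ :=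
  vp p (fun x => (vp p (fun y => f x y)).toReal)
    + vp p (fun y => (vp p (fun x => f x y)).toReal)

/-- Membership in `L^p_0([0,1]^2)`: membership in `L^p([0,1]^2)` together with
vanishing of the linear mean values `∫₀¹ f(x,t) dt` and `∫₀¹ f(t,y) dt` for a.e.
`x` resp. `y`. -/
def MemLp20 (p : ℝ) (f : ℝ → ℝ → ℝ) : Prop :=
  MemLp2 p f ∧ (∀ᵐ x : ℝ ∂volume, ∫ t in (0:ℝ)..1, f x t = 0) ∧
    (∀ᵐ y : ℝ ∂volume, ∫ t in (0:ℝ)..1, f t y = 0)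

/-- `T` is a trigonometric polynomial of degree `(n,m)` in two variables. -/
def IsTrigPoly2 (n m : ℕ) (T : ℝ → ℝ → ℝ) : Prop :=
  ∃ a b c d : ℕ → ℕ → ℝ, ∀ x y : ℝ,
    T x y = ∑ j ∈ Finset.range (n + 1), ∑ k ∈ Finset.range (m + 1),
      (a j k * Real.cos (2 * Real.pi * j * x) * Real.cos (2 * Real.pi * k * y)
        + b j k * Real.cos (2 * Real.pi * j * x) * Real.sin (2 * Real.pi * k * y)
        + c j k * Real.sin (2 * Real.pi * j * x) * Real.cos (2 * Real.pi * k * y)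
        + d j k * Real.sin (2 * Real.pi * j * x) * Real.sin (2 * Real.pi * k * y))

end

/-!
Subtracting functions of one variable changes no mixed difference, so one may assume that both
linear means of `f` vanish. Let `S h k` be the average of `f` over the translates of
`(0, h] × (0, k]`. By periodicity `S 1 k` and `S h 1` are then zero, so the mixed differences in
`j` and `k` of `S 2⁻ʲ 2⁻ᵏ` telescope to `S 2⁻ⁿ 2⁻ⁿ`, which tends to `f` almost everywhere by
Lebesgue's differentiation theorem. Each such difference is a quarter of the Steklov mean of the
mixed difference of `f` with the steps of the finer level, hence is continuous and, by Hölder's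
inequality, at most `(h k)^(-1/p) ω(f; h, k)_p` in size. The sum of these bounds over the dyadic
`h` and `k` is controlled by `I_p(f)`, so the series converges uniformly to a continuous function.
-/

section Translation

variable {V E : Type*} [NormedAddCommGroup V] [MeasurableSpace V] [BorelSpace V]
  {μ : Measure V} [μ.IsAddHaarMeasure] [NormedAddCommGroup E] {F : V → E}

lemma locallyIntegrable_comp_add_left (hF : LocallyIntegrable F μ) (v : V) :
    LocallyIntegrable (fun z => F (v + z)) μ := by
  refine (locallyIntegrable_map_homeomorph (Homeomorph.addLeft v) (f := F) (μ := μ)).1 ?_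
  rwa [Homeomorph.coe_addLeft, map_add_left_eq_self]

variable [ProperSpace V] [NormedSpace ℝ E]

lemma continuous_setIntegral_comp_add_left_of_integrable (hF : Integrable F μ) (s : Set V) :
    Continuous fun v => ∫ z in s, F (v + z) ∂μ := by
  have hLp : MemLp F 1 μ := memLp_one_iff_integrable.2 hF
  have h : ∀ v, ∫ z in s, F (v + z) ∂μ = ∫ z in s, (DomAddAct.mk v +ᵥ hLp.toLp F) z ∂μ := by
    intro v
    refine integral_congr_ae (ae_restrict_of_ae ?_)
    filter_upwards [DomAddAct.vadd_Lp_ae_eq (DomAddAct.mk v) (hLp.toLp F),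
      (measurePreserving_add_left μ v).quasiMeasurePreserving.ae_eq_comp hLp.coeFn_toLp]
      with z hz hz'
    rw [hz]
    exact hz'.symm
  simp_rw [h]
  -- Translations act continuously on `L¹`, on which integration over `s` is continuous.
  have : Fact ((1 : ℝ≥0∞) ≠ ∞) := ⟨ENNReal.one_ne_top⟩
  exact (continuous_setIntegral s).comp (DomAddAct.continuous_mk.vadd continuous_const)

lemma continuous_setIntegral_comp_add_left (hF : LocallyIntegrable F μ) {s : Set V}
    (hs : MeasurableSet s) (hbdd : Bornology.IsBounded s) :
    Continuous fun v => ∫ z in s, F (v + z) ∂μ := by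
  refine continuous_iff_continuousAt.2 fun v => ?_
  obtain ⟨R, hR⟩ := hbdd.subset_closedBall 0
  set K := Metric.closedBall v (R + 1)
  have hFK : Integrable (K.indicator F) μ :=
    (hF.integrableOn_isCompact (isCompact_closedBall v (R + 1))).integrable_indicator
      measurableSet_closedBall
  refine (continuous_setIntegral_comp_add_left_of_integrable hFK s).continuousAt.congr ?_
  filter_upwards [Metric.ball_mem_nhds v one_pos] with v' hv'
  refine setIntegral_congr_fun hs fun z hz => indicator_of_mem ?_ F
  have hz' : ‖z‖ ≤ R := by simpa using hR hz
  rw [Metric.mem_closedBall, dist_eq_norm]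
  calc ‖v' + z - v‖ = ‖z + (v' - v)‖ := by congr 1; abel
    _ ≤ ‖z‖ + ‖v' - v‖ := norm_add_le _ _
    _ ≤ R + 1 := add_le_add hz' (mem_ball_iff_norm.1 hv').le

end Translation

section Steklov

/-- The half-open rectangle `(0, h] × (0, k]`, empty unless `0 < h` and `0 < k`. Half-open
rectangles tile the plane exactly under translation. -/
def box (h k : ℝ) : Set (ℝ × ℝ) := Ioc 0 h ×ˢ Ioc 0 k

lemma measurableSet_box (h k : ℝ) : MeasurableSet (box h k) :=
  measurableSet_Ioc.prod measurableSet_Ioc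

lemma box_subset_box {h h' k k' : ℝ} (hh : h ≤ h') (hk : k ≤ k') : box h k ⊆ box h' k' :=
  prod_mono (Ioc_subset_Ioc_right hh) (Ioc_subset_Ioc_right hk)

lemma isBounded_box (h k : ℝ) : Bornology.IsBounded (box h k) :=
  (Metric.isBounded_Ioc 0 h).prod (Metric.isBounded_Ioc 0 k)

lemma volume_box {h : ℝ} (hh : 0 ≤ h) (k : ℝ) : volume (box h k) = ENNReal.ofReal (h * k) := by
  rw [box, Measure.volume_eq_prod, Measure.prod_prod, Real.volume_Ioc, Real.volume_Ioc, sub_zero,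
    sub_zero, ENNReal.ofReal_mul hh]

instance isFiniteMeasure_restrict_box (h k : ℝ) :
    IsFiniteMeasure ((volume : Measure (ℝ × ℝ)).restrict (box h k)) :=
  isFiniteMeasure_restrict.2 (isBounded_box h k).measure_lt_top.ne

lemma volume_restrict_box (h k : ℝ) :
    (volume : Measure (ℝ × ℝ)).restrict (box h k) =
      (volume.restrict (Ioc 0 h)).prod (volume.restrict (Ioc 0 k)) := by
  rw [box, Measure.volume_eq_prod, Measure.prod_restrict]

variable {E : Type*} [NormedAddCommGroup E] {F : ℝ × ℝ → E}

lemma integrableOn_box (hF : LocallyIntegrable F) (h k : ℝ) : IntegrableOn F (box h k) :=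
  (hF.integrableOn_isCompact (isBounded_box h k).isCompact_closure).mono_set subset_closure

lemma locallyIntegrable_comp_swap (hF : LocallyIntegrable F) :
    LocallyIntegrable (F ∘ Prod.swap) := by
  refine (locallyIntegrable_map_homeomorph (Homeomorph.prodComm ℝ ℝ) (f := F)).1 ?_
  rwa [Homeomorph.coe_prodComm, Measure.volume_eq_prod, Measure.prod_swap]

/-- The mixed difference `Δ(s,t)F` of a function on the plane. -/
def mixedDiff (F : ℝ × ℝ → E) (s t : ℝ) (z : ℝ × ℝ) : E :=
  F (z + (s, t)) - F (z + (s, 0)) - F (z + (0, t)) + F z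

lemma mixedDiff_periodic {v : ℝ × ℝ} (hF : Function.Periodic F v) (s t : ℝ) :
    Function.Periodic (mixedDiff F s t) v := fun z => by
  simp only [mixedDiff, add_right_comm z v, hF _]

lemma aestronglyMeasurable_mixedDiff (hF : AEStronglyMeasurable F) (s t : ℝ) :
    AEStronglyMeasurable (mixedDiff F s t) := by
  have hshift (v : ℝ × ℝ) : AEStronglyMeasurable fun z => F (z + v) :=
    hF.comp_quasiMeasurePreserving (measurePreserving_add_right volume v).quasiMeasurePreserving
  exact (((hshift _).sub (hshift _)).sub (hshift _)).add hF

variable [NormedSpace ℝ E]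

/-- The Steklov mean of `F`, its average over the rectangle `w + (0, h] × (0, k]`. It is a
continuous approximation of `F`; the factor `(h * k)⁻¹` is meaningful for `0 < h` and `0 < k`. -/
noncomputable def steklov (F : ℝ × ℝ → E) (h k : ℝ) (w : ℝ × ℝ) : E :=
  (h * k)⁻¹ • ∫ z in box h k, F (w + z)

lemma continuous_steklov (hF : LocallyIntegrable F) (h k : ℝ) : Continuous (steklov F h k) :=
  (continuous_setIntegral_comp_add_left hF (measurableSet_box h k) (isBounded_box h k)).const_smul _

lemma steklov_periodic {v : ℝ × ℝ} (hF : Function.Periodic F v) (h k : ℝ) :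
    Function.Periodic (steklov F h k) v := fun w => by
  simp only [steklov, add_right_comm w v, hF _]

lemma steklov_comp_swap (F : ℝ × ℝ → E) (h k : ℝ) (w : ℝ × ℝ) :
    steklov (F ∘ Prod.swap) k h w.swap = steklov F h k w := by
  rw [steklov, steklov, mul_comm, box, box, Measure.volume_eq_prod, ← setIntegral_prod_swap]
  rfl

lemma steklov_two_mul_left (hF : LocallyIntegrable F) {h : ℝ} (hh : 0 ≤ h) (k : ℝ) (w : ℝ × ℝ) :
    steklov F (2 * h) k w = (1 / 2 : ℝ) • (steklov F h k w + steklov F h k (w + (h, 0))) := by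
  have hint (a b : ℝ) : IntegrableOn (fun z => F (w + z)) (Ioc a b ×ˢ Ioc 0 k) :=
    ((locallyIntegrable_comp_add_left hF w).integrableOn_isCompact
      (isCompact_Icc.prod isCompact_Icc)).mono_set
      (prod_mono (Ioc_subset_Icc_self (a := a) (b := b)) (Ioc_subset_Icc_self (a := 0) (b := k)))
  have hsplit : box (2 * h) k = box h k ∪ Ioc h (2 * h) ×ˢ Ioc 0 k := by
    rw [box, box, ← union_prod, Ioc_union_Ioc_eq_Ioc hh (by linarith)]
  have hdisj : Disjoint (box h k) (Ioc h (2 * h) ×ˢ Ioc 0 k) :=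
    disjoint_prod.2 (Or.inl (Ioc_disjoint_Ioc_of_le le_rfl))
  have hshift : ∫ z in Ioc h (2 * h) ×ˢ Ioc 0 k, F (w + z) =
      ∫ z in box h k, F (w + (h, 0) + z) := by
    have hpre : box h k = ((h, 0) + · : ℝ × ℝ → ℝ × ℝ) ⁻¹' (Ioc h (2 * h) ×ˢ Ioc 0 k) := by
      ext z
      simp [box, two_mul]
    simp only [hpre, add_assoc]
    exact ((measurePreserving_add_left volume (h, (0 : ℝ))).setIntegral_preimage_emb
      (measurableEmbedding_addLeft _) (fun z => F (w + z)) _).symm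
  rw [steklov, hsplit, setIntegral_union hdisj (measurableSet_Ioc.prod measurableSet_Ioc)
    (hint 0 h) (hint h (2 * h)), hshift, steklov, steklov, ← smul_add, smul_smul]
  congr 1
  ring

lemma steklov_two_mul_right (hF : LocallyIntegrable F) (h : ℝ) {k : ℝ} (hk : 0 ≤ k) (w : ℝ × ℝ) :
    steklov F h (2 * k) w = (1 / 2 : ℝ) • (steklov F h k w + steklov F h k (w + (0, k))) := by
  simp only [← steklov_comp_swap F h]
  exact steklov_two_mul_left (locallyIntegrable_comp_swap hF) hk h w.swap

lemma steklov_mixedDiff (hF : LocallyIntegrable F) (s t h k : ℝ) (w : ℝ × ℝ) :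
    steklov (mixedDiff F s t) h k w = mixedDiff (steklov F h k) s t w := by
  have hint (v : ℝ × ℝ) : Integrable (fun z => F (w + z + v)) (volume.restrict (box h k)) := by
    simp only [add_right_comm w _ v]
    exact integrableOn_box (locallyIntegrable_comp_add_left hF (w + v)) h k
  have hint₀ : Integrable (fun z => F (w + z)) (volume.restrict (box h k)) := by simpa using hint 0
  have hint₂ (u v : ℝ × ℝ) :
      Integrable (fun z => F (w + z + u) - F (w + z + v)) (volume.restrict (box h k)) :=
    (hint u).sub (hint v)
  have hint₃ (u v v' : ℝ × ℝ) : Integrable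
      (fun z => F (w + z + u) - F (w + z + v) - F (w + z + v')) (volume.restrict (box h k)) :=
    (hint₂ u v).sub (hint v')
  simp only [steklov, mixedDiff, ← smul_sub, ← smul_add, add_right_comm w]
  rw [integral_add (hint₃ _ _ _) hint₀, integral_sub (hint₂ _ _) (hint _),
    integral_sub (hint _) (hint _)]

lemma steklov_sub_sub_add (hF : LocallyIntegrable F) {h k : ℝ} (hh : 0 ≤ h) (hk : 0 ≤ k)
    (w : ℝ × ℝ) :
    steklov F h k w - steklov F (2 * h) k w - steklov F h (2 * k) w + steklov F (2 * h) (2 * k) w =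
      (1 / 4 : ℝ) • steklov (mixedDiff F h k) h k w := by
  have hcorner : w + (h, 0) + (0, k) = w + (h, k) := by ext <;> simp
  rw [steklov_mixedDiff hF, mixedDiff, steklov_two_mul_left hF hh (2 * k),
    steklov_two_mul_left hF hh k]
  simp only [steklov_two_mul_right hF h hk, hcorner]
  module

lemma steklov_eq_setAverage_closedBall (F : ℝ × ℝ → E) {r : ℝ} (hr : 0 ≤ r) (w : ℝ × ℝ) :
    steklov F r r w = ⨍ z in Metric.closedBall (w + (r / 2, r / 2)) (r / 2), F z := by
  have hbox : (box r r : Set (ℝ × ℝ)) =ᵐ[volume] Metric.closedBall (r / 2, r / 2) (r / 2) := by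
    rw [← closedBall_prod_same, Real.closedBall_eq_Icc, sub_self, add_halves, box,
      Measure.volume_eq_prod]
    exact Measure.set_prod_ae_eq Ioc_ae_eq_Icc Ioc_ae_eq_Icc
  have hshift : ∫ z in Metric.closedBall (w + (r / 2, r / 2)) (r / 2), F z =
      ∫ z in box r r, F (w + z) := by
    rw [setIntegral_congr_set hbox, ← (measurePreserving_add_left volume w).setIntegral_preimage_emb
      (measurableEmbedding_addLeft w), preimage_add_closedBall, add_sub_cancel_left]
  have hvol : volume.real (Metric.closedBall (w + (r / 2, r / 2)) (r / 2)) = r * r := by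
    rw [measureReal_def, Measure.addHaar_closedBall_center,
      ← Measure.addHaar_closedBall_center volume (r / 2, r / 2),
      ← measure_congr hbox, volume_box hr, ENNReal.toReal_ofReal (by positivity)]
  rw [setAverage_eq, hshift, hvol, steklov]

lemma ae_tendsto_steklov [CompleteSpace E] (hF : LocallyIntegrable F) :
    ∀ᵐ w, Tendsto (fun r => steklov F r r w) (nhdsWithin 0 (Ioi 0)) (nhds (F w)) := by
  have hhalf : Tendsto (fun r : ℝ => r / 2) (nhdsWithin 0 (Ioi 0)) (nhdsWithin 0 (Ioi 0)) := by
    refine tendsto_nhdsWithin_iff.2 ⟨?_, eventually_mem_nhdsWithin.mono fun r (hr : 0 < r) => ?_⟩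
    · exact ((continuous_id.div_const (2 : ℝ)).tendsto' 0 0 (zero_div 2)).mono_left
        nhdsWithin_le_nhds
    · exact half_pos hr
  filter_upwards [IsUnifLocDoublingMeasure.ae_tendsto_average volume hF 1] with w hw
  have hlim := hw (fun r : ℝ => w + (r / 2, r / 2)) (fun r => r / 2) hhalf <|
    eventually_mem_nhdsWithin.mono fun r (hr : 0 < r) => by
      simp [Prod.norm_def, abs_of_pos hr]
  refine hlim.congr' (eventually_mem_nhdsWithin.mono fun r (hr : 0 < r) => ?_)
  exact (steklov_eq_setAverage_closedBall F hr.le w).symm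

lemma steklov_one_right_eq_zero (hF : LocallyIntegrable F) (hper : Function.Periodic F (0, 1))
    (hzero : ∀ᵐ x, ∫ t in (0 : ℝ)..1, F (x, t) = 0) (h : ℝ) (w : ℝ × ℝ) :
    steklov F h 1 w = 0 := by
  have hperiod (x : ℝ) : ∫ t in Ioc (0 : ℝ) 1, F (x, w.2 + t) = ∫ t in (0 : ℝ)..1, F (x, t) := by
    have hsec : Function.Periodic (fun t => F (x, t)) 1 := fun t => by simpa using hper (x, t)
    rw [← intervalIntegral.integral_of_le zero_le_one,
      intervalIntegral.integral_comp_add_left (fun t => F (x, t)), add_zero]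
    simpa using hsec.intervalIntegral_add_eq w.2 0
  have hzero' : ∀ᵐ s, ∫ t in (0 : ℝ)..1, F (w.1 + s, t) = 0 :=
    (measurePreserving_add_left volume w.1).quasiMeasurePreserving.ae hzero
  have hint := integrableOn_box (locallyIntegrable_comp_add_left hF w) h 1
  rw [IntegrableOn, volume_restrict_box] at hint
  rw [steklov, volume_restrict_box, integral_prod _ hint,
    integral_eq_zero_of_ae (ae_restrict_of_ae ?_), smul_zero]
  filter_upwards [hzero'] with s hs
  exact (hperiod (w.1 + s)).trans hs

lemma steklov_one_left_eq_zero (hF : LocallyIntegrable F) (hper : Function.Periodic F (1, 0))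
    (hzero : ∀ᵐ y, ∫ t in (0 : ℝ)..1, F (t, y) = 0) (k : ℝ) (w : ℝ × ℝ) :
    steklov F 1 k w = 0 := by
  rw [← steklov_comp_swap]
  exact steklov_one_right_eq_zero (locallyIntegrable_comp_swap hF) (fun z => hper z.swap) hzero k
    w.swap

end Steklov

section Periodic

lemma setLIntegral_Ioc_comp_add_left_of_periodic {φ : ℝ → ℝ≥0∞} {T : ℝ}
    (hφ : Function.Periodic φ T) (hT : 0 < T) (a : ℝ) :
    ∫⁻ t in Ioc 0 T, φ (a + t) = ∫⁻ t in Ioc 0 T, φ t := by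
  have hshift : ∫⁻ t in Ioc 0 T, φ (a + t) = ∫⁻ t in Ioc a (a + T), φ t := by
    simpa using (measurePreserving_add_left volume a).setLIntegral_comp_preimage_emb
      (measurableEmbedding_addLeft a) φ (Ioc a (a + T))
  have : VAddInvariantMeasure (AddSubgroup.zmultiples T) ℝ volume :=
    ⟨fun c s _ => measure_preimage_add _ _ _⟩
  have hperiod : ∫⁻ t in Ioc a (a + T), φ t = ∫⁻ t in Ioc 0 (0 + T), φ t :=
    (isAddFundamentalDomain_Ioc hT a).setLIntegral_eq (isAddFundamentalDomain_Ioc hT 0) φ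
      fun g t => hφ.map_vadd_zmultiples g t
  rw [hshift, hperiod, zero_add]

lemma setLIntegral_box_one_comp_add_left_of_periodic {φ : ℝ × ℝ → ℝ≥0∞} (hφ : AEMeasurable φ)
    (h₁ : Function.Periodic φ (1, 0)) (h₂ : Function.Periodic φ (0, 1)) (w : ℝ × ℝ) :
    ∫⁻ z in box 1 1, φ (w + z) = ∫⁻ z in box 1 1, φ z := by
  have hφw : AEMeasurable (fun z => φ (w + z)) :=
    hφ.comp_quasiMeasurePreserving (measurePreserving_add_left volume w).quasiMeasurePreserving
  have hx (y : ℝ) : Function.Periodic (fun x => φ (x, y)) 1 := fun x => by simpa using h₁ (x, y)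
  have hy (x : ℝ) : Function.Periodic (fun y => φ (x, y)) 1 := fun y => by simpa using h₂ (x, y)
  have hmean : Function.Periodic (fun x => ∫⁻ y in Ioc (0 : ℝ) 1, φ (x, y)) 1 := fun x =>
    lintegral_congr fun y => hx y x
  have hrestrict {ψ : ℝ × ℝ → ℝ≥0∞} (hψ : AEMeasurable ψ) :
      ∫⁻ z in box 1 1, ψ z = ∫⁻ x in Ioc (0 : ℝ) 1, ∫⁻ y in Ioc (0 : ℝ) 1, ψ (x, y) := by
    have hψ' := hψ.restrict (s := box 1 1)
    rw [volume_restrict_box] at hψ' ⊢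
    exact lintegral_prod ψ hψ'
  calc ∫⁻ z in box 1 1, φ (w + z)
      = ∫⁻ x in Ioc (0 : ℝ) 1, ∫⁻ y in Ioc (0 : ℝ) 1, φ (w.1 + x, w.2 + y) := hrestrict hφw
    _ = ∫⁻ x in Ioc (0 : ℝ) 1, ∫⁻ y in Ioc (0 : ℝ) 1, φ (w.1 + x, y) := lintegral_congr fun x =>
        setLIntegral_Ioc_comp_add_left_of_periodic (hy (w.1 + x)) one_pos w.2
    _ = ∫⁻ x in Ioc (0 : ℝ) 1, ∫⁻ y in Ioc (0 : ℝ) 1, φ (x, y) :=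
        setLIntegral_Ioc_comp_add_left_of_periodic hmean one_pos w.1
    _ = ∫⁻ z in box 1 1, φ z := (hrestrict hφ).symm

variable {E : Type*} [NormedAddCommGroup E] {F : ℝ × ℝ → E}

lemma locallyIntegrable_of_periodic (h₁ : Function.Periodic F (1, 0))
    (h₂ : Function.Periodic F (0, 1)) (hF : AEStronglyMeasurable F)
    (hint : IntegrableOn F (box 1 1)) : LocallyIntegrable F := by
  intro w
  set v : ℝ × ℝ := w - (1 / 2, 1 / 2) with hv
  have hpre : (v + ·) ⁻¹' (Ioc v.1 (v.1 + 1) ×ˢ Ioc v.2 (v.2 + 1)) = box 1 1 := by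
    ext z
    simp [box]
  have hmem : Ioc v.1 (v.1 + 1) ×ˢ Ioc v.2 (v.2 + 1) ∈ nhds w :=
    prod_mem_nhds
      (Ioc_mem_nhds (by rw [hv, Prod.fst_sub]; linarith) (by rw [hv, Prod.fst_sub]; linarith))
      (Ioc_mem_nhds (by rw [hv, Prod.snd_sub]; linarith) (by rw [hv, Prod.snd_sub]; linarith))
  refine ⟨_, hmem, hF.restrict, ?_⟩
  rw [HasFiniteIntegral, ← (measurePreserving_add_left volume v).setLIntegral_comp_preimage_emb
    (measurableEmbedding_addLeft v), hpre, setLIntegral_box_one_comp_add_left_of_periodic hF.enorm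
    (fun z => congrArg _ (h₁ z)) (fun z => congrArg _ (h₂ z))]
  exact hint.2

lemma eLpNorm_comp_add_left_of_periodic (h₁ : Function.Periodic F (1, 0))
    (h₂ : Function.Periodic F (0, 1)) (hF : AEStronglyMeasurable F) {q : ℝ≥0∞} (hq₀ : q ≠ 0)
    (hq : q ≠ ⊤) (w : ℝ × ℝ) :
    eLpNorm (fun z => F (w + z)) q (volume.restrict (box 1 1)) =
      eLpNorm F q (volume.restrict (box 1 1)) := by
  rw [eLpNorm_eq_lintegral_rpow_enorm_toReal hq₀ hq, eLpNorm_eq_lintegral_rpow_enorm_toReal hq₀ hq,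
    setLIntegral_box_one_comp_add_left_of_periodic (φ := fun z => ‖F z‖ₑ ^ q.toReal)
      (hF.enorm.pow_const _) (fun z => by simp only [h₁ z]) (fun z => by simp only [h₂ z])]

variable [NormedSpace ℝ E]

lemma enorm_steklov_le (h₁ : Function.Periodic F (1, 0)) (h₂ : Function.Periodic F (0, 1))
    (hF : AEStronglyMeasurable F) {p h k : ℝ} (hp : 1 ≤ p) (hh : 0 < h) (hk : 0 < k)
    (hh1 : h ≤ 1) (hk1 : k ≤ 1) (w : ℝ × ℝ) :
    ‖steklov F h k w‖ₑ ≤ ENNReal.ofReal ((h * k) ^ (-(1 / p))) *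
        eLpNorm F (ENNReal.ofReal p) (volume.restrict (box 1 1)) := by
  have hhk : 0 < h * k := mul_pos hh hk
  have hp₀ : 0 < p := one_pos.trans_le hp
  have hmeas : AEStronglyMeasurable (fun z => F (w + z)) :=
    hF.comp_quasiMeasurePreserving (measurePreserving_add_left volume w).quasiMeasurePreserving
  have hHolder : ∫⁻ z in box h k, ‖F (w + z)‖ₑ ≤
      eLpNorm (fun z => F (w + z)) (ENNReal.ofReal p) (volume.restrict (box h k)) *
        ENNReal.ofReal ((h * k) ^ (1 - 1 / p)) := by
    have := eLpNorm_le_eLpNorm_mul_rpow_measure_univ (ENNReal.one_le_ofReal.2 hp)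
      (hmeas.restrict (s := box h k))
    rwa [eLpNorm_one_eq_lintegral_enorm, Measure.restrict_apply_univ, volume_box hh.le,
      ENNReal.toReal_one, ENNReal.toReal_ofReal hp₀.le, div_one,
      ENNReal.ofReal_rpow_of_pos hhk] at this
  have hperiod : eLpNorm (fun z => F (w + z)) (ENNReal.ofReal p) (volume.restrict (box h k)) ≤
      eLpNorm F (ENNReal.ofReal p) (volume.restrict (box 1 1)) :=
    (eLpNorm_mono_measure _ (Measure.restrict_mono_set _ (box_subset_box hh1 hk1))).trans_eq
      (eLpNorm_comp_add_left_of_periodic h₁ h₂ hF (ENNReal.ofReal_pos.2 hp₀).ne'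
        ENNReal.ofReal_ne_top w)
  have hpow : (h * k)⁻¹ * (h * k) ^ (1 - 1 / p) = (h * k) ^ (-(1 / p)) := by
    rw [← Real.rpow_neg_one, ← Real.rpow_add hhk]
    congr 1
    ring
  calc ‖steklov F h k w‖ₑ
      = ENNReal.ofReal (h * k)⁻¹ * ‖∫ z in box h k, F (w + z)‖ₑ := by
        rw [steklov, enorm_smul, Real.enorm_eq_ofReal (inv_nonneg.2 hhk.le)]
    _ ≤ ENNReal.ofReal (h * k)⁻¹ * (eLpNorm F (ENNReal.ofReal p) (volume.restrict (box 1 1)) *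
          ENNReal.ofReal ((h * k) ^ (1 - 1 / p))) := by
        gcongr
        exact (enorm_integral_le_lintegral_enorm _).trans (hHolder.trans (by gcongr))
    _ = _ := by
        rw [mul_left_comm, ← ENNReal.ofReal_mul (inv_nonneg.2 hhk.le), hpow, mul_comm]

end Periodic

section DyadicBlocks

lemma sum_range_prod_range_mixed_sub {G : Type*} [AddCommGroup G] (a : ℕ → ℕ → G) (m n : ℕ) :
    ∑ q ∈ Finset.range m ×ˢ Finset.range n,
        (a (q.1 + 1) (q.2 + 1) - a q.1 (q.2 + 1) - a (q.1 + 1) q.2 + a q.1 q.2) =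
      a m n - a 0 n - a m 0 + a 0 0 := by
  have hinner (j : ℕ) : ∑ k ∈ Finset.range n,
      (a (j + 1) (k + 1) - a j (k + 1) - a (j + 1) k + a j k) =
        (a (j + 1) n - a (j + 1) 0) - (a j n - a j 0) := by
    rw [← Finset.sum_range_sub, ← Finset.sum_range_sub, ← Finset.sum_sub_distrib]
    exact Finset.sum_congr rfl fun k _ => by abel
  rw [Finset.sum_product]
  simp only [hinner]
  rw [Finset.sum_range_sub fun j => a j n - a j 0]
  abel

lemma tendsto_mixed_sub_tsum {G : Type*} [AddCommGroup G] [TopologicalSpace G] {a : ℕ → ℕ → G}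
    (ha : Summable fun q : ℕ × ℕ =>
      a (q.1 + 1) (q.2 + 1) - a q.1 (q.2 + 1) - a (q.1 + 1) q.2 + a q.1 q.2) :
    Tendsto (fun n => a n n - a 0 n - a n 0 + a 0 0) atTop (nhds (∑' q : ℕ × ℕ,
      (a (q.1 + 1) (q.2 + 1) - a q.1 (q.2 + 1) - a (q.1 + 1) q.2 + a q.1 q.2))) := by
  have hranges : Tendsto (fun n => (Finset.range n, Finset.range n)) atTop atTop := by
    rw [← prod_atTop_atTop_eq]
    exact tendsto_finset_range.prodMk tendsto_finset_range
  have hsquares : Tendsto (fun n : ℕ => Finset.range n ×ˢ Finset.range n) atTop atTop :=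
    tendsto_finsetProd_atTop.comp hranges
  exact (ha.hasSum.comp hsquares).congr fun n => sum_range_prod_range_mixed_sub a n n

variable {E : Type*} [NormedAddCommGroup E] [NormedSpace ℝ E] {F : ℝ × ℝ → E}

/-- The dyadic block of `F` at level `q = (j, k)`: the mixed difference in the two level indices
of the Steklov means with side lengths `2⁻ʲ` and `2⁻ᵏ`. -/
noncomputable def steklovBlock (F : ℝ × ℝ → E) (q : ℕ × ℕ) (w : ℝ × ℝ) : E :=
  steklov F ((1 / 2) ^ (q.1 + 1)) ((1 / 2) ^ (q.2 + 1)) w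
    - steklov F ((1 / 2) ^ q.1) ((1 / 2) ^ (q.2 + 1)) w
    - steklov F ((1 / 2) ^ (q.1 + 1)) ((1 / 2) ^ q.2) w
    + steklov F ((1 / 2) ^ q.1) ((1 / 2) ^ q.2) w

lemma continuous_steklovBlock (hF : LocallyIntegrable F) (q : ℕ × ℕ) :
    Continuous (steklovBlock F q) :=
  (((continuous_steklov hF _ _).sub (continuous_steklov hF _ _)).sub
    (continuous_steklov hF _ _)).add (continuous_steklov hF _ _)

lemma steklovBlock_periodic {v : ℝ × ℝ} (hF : Function.Periodic F v) (q : ℕ × ℕ) :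
    Function.Periodic (steklovBlock F q) v := fun w => by
  simp only [steklovBlock, steklov_periodic hF _ _ w]

lemma steklovBlock_eq (hF : LocallyIntegrable F) (q : ℕ × ℕ) (w : ℝ × ℝ) :
    steklovBlock F q w = (1 / 4 : ℝ) •
      steklov (mixedDiff F ((1 / 2) ^ (q.1 + 1)) ((1 / 2) ^ (q.2 + 1)))
        ((1 / 2) ^ (q.1 + 1)) ((1 / 2) ^ (q.2 + 1)) w := by
  have hdouble (n : ℕ) : (1 / 2 : ℝ) ^ n = 2 * (1 / 2) ^ (n + 1) := by ring
  rw [steklovBlock, hdouble q.1, hdouble q.2]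
  exact steklov_sub_sub_add hF (by positivity) (by positivity) w

lemma enorm_steklovBlock_le (h₁ : Function.Periodic F (1, 0)) (h₂ : Function.Periodic F (0, 1))
    (hF : LocallyIntegrable F) {p : ℝ} (hp : 1 ≤ p) (q : ℕ × ℕ) (w : ℝ × ℝ) :
    ‖steklovBlock F q w‖ₑ ≤
      ENNReal.ofReal (1 / 4 * ((1 / 2) ^ (q.1 + 1) * (1 / 2) ^ (q.2 + 1)) ^ (-(1 / p))) *
        eLpNorm (mixedDiff F ((1 / 2) ^ (q.1 + 1)) ((1 / 2) ^ (q.2 + 1))) (ENNReal.ofReal p)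
          (volume.restrict (box 1 1)) := by
  have hle (n : ℕ) : (1 / 2 : ℝ) ^ n ≤ 1 := pow_le_one₀ (by norm_num) (by norm_num)
  rw [steklovBlock_eq hF, enorm_smul, Real.enorm_eq_ofReal (by norm_num),
    ENNReal.ofReal_mul (by norm_num), mul_assoc]
  gcongr
  exact enorm_steklov_le (mixedDiff_periodic h₁ _ _) (mixedDiff_periodic h₂ _ _)
    (aestronglyMeasurable_mixedDiff hF.aestronglyMeasurable _ _) hp (by positivity) (by positivity)
    (hle _) (hle _) w

lemma ae_eq_tsum_steklovBlock [CompleteSpace E] (h₁ : Function.Periodic F (1, 0))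
    (h₂ : Function.Periodic F (0, 1)) (hF : LocallyIntegrable F)
    (hzero₁ : ∀ᵐ x, ∫ t in (0 : ℝ)..1, F (x, t) = 0)
    (hzero₂ : ∀ᵐ y, ∫ t in (0 : ℝ)..1, F (t, y) = 0)
    (hsum : ∀ w, Summable fun q => steklovBlock F q w) :
    F =ᵐ[volume] fun w => ∑' q, steklovBlock F q w := by
  have hpow : Tendsto (fun n : ℕ => (1 / 2 : ℝ) ^ n) atTop (nhdsWithin 0 (Ioi 0)) :=
    tendsto_pow_atTop_nhdsWithin_zero_of_lt_one (by norm_num) (by norm_num)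
  filter_upwards [ae_tendsto_steklov hF] with w hw
  refine tendsto_nhds_unique (hw.comp hpow) ?_
  refine (tendsto_mixed_sub_tsum
    (a := fun j k => steklov F ((1 / 2) ^ j) ((1 / 2) ^ k) w) (hsum w)).congr fun n => ?_
  simp only [pow_zero, steklov_one_left_eq_zero hF h₁ hzero₂,
    steklov_one_right_eq_zero hF h₂ hzero₁, sub_zero, add_zero, Function.comp_apply]

lemma exists_continuous_periodic_ae_eq [CompleteSpace E] (h₁ : Function.Periodic F (1, 0))
    (h₂ : Function.Periodic F (0, 1)) (hF : LocallyIntegrable F)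
    (hzero₁ : ∀ᵐ x, ∫ t in (0 : ℝ)..1, F (x, t) = 0)
    (hzero₂ : ∀ᵐ y, ∫ t in (0 : ℝ)..1, F (t, y) = 0)
    {B : ℕ × ℕ → ℝ≥0∞} (hB : ∑' q, B q ≠ ⊤) (hbound : ∀ q w, ‖steklovBlock F q w‖ₑ ≤ B q) :
    ∃ G : ℝ × ℝ → E, Continuous G ∧ Function.Periodic G (1, 0) ∧ Function.Periodic G (0, 1) ∧
      F =ᵐ[volume] G := by
  have hsum : Summable fun q => (B q).toReal := ENNReal.summable_toReal hB
  have hnorm (q : ℕ × ℕ) (w : ℝ × ℝ) : ‖steklovBlock F q w‖ ≤ (B q).toReal := by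
    rw [← toReal_enorm]
    exact ENNReal.toReal_mono (ENNReal.ne_top_of_tsum_ne_top hB q) (hbound q w)
  refine ⟨fun w => ∑' q, steklovBlock F q w,
    continuous_tsum (continuous_steklovBlock hF) hsum hnorm,
    fun w => tsum_congr fun q => steklovBlock_periodic h₁ q w,
    fun w => tsum_congr fun q => steklovBlock_periodic h₂ q w,
    ae_eq_tsum_steklovBlock h₁ h₂ hF hzero₁ hzero₂ fun w => ?_⟩
  exact Summable.of_norm_bounded hsum fun q => hnorm q w

lemma tsum_mul_le_lintegral_Ioc {G : ℝ → ℝ≥0∞} {c : ℕ → ℝ≥0∞}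
    (hc : ∀ k, ∀ v ∈ Ioc ((1 / 2 : ℝ) ^ (k + 1)) ((1 / 2) ^ k), c k ≤ G v) :
    ∑' k, c k * ENNReal.ofReal ((1 / 2) ^ (k + 1)) ≤ ∫⁻ v in Ioc (0 : ℝ) 1, G v := by
  have hanti : Antitone fun k : ℕ => (1 / 2 : ℝ) ^ k :=
    pow_right_anti₀ (by norm_num) (by norm_num)
  have hvol (k : ℕ) : volume (Ioc ((1 / 2 : ℝ) ^ (k + 1)) ((1 / 2) ^ k)) =
      ENNReal.ofReal ((1 / 2) ^ (k + 1)) := by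
    rw [Real.volume_Ioc]
    congr 1
    ring
  calc ∑' k, c k * ENNReal.ofReal ((1 / 2) ^ (k + 1))
      ≤ ∑' k, ∫⁻ v in Ioc ((1 / 2 : ℝ) ^ (k + 1)) ((1 / 2) ^ k), G v :=
        ENNReal.tsum_le_tsum fun k => by
          rw [← hvol, ← setLIntegral_const]
          exact setLIntegral_mono' measurableSet_Ioc (hc k)
    _ = ∫⁻ v in ⋃ k : ℕ, Ioc ((1 / 2 : ℝ) ^ (k + 1)) ((1 / 2) ^ k), G v :=
        (lintegral_iUnion (fun _ => measurableSet_Ioc) hanti.pairwise_disjoint_on_Ioc_succ G).symm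
    _ ≤ ∫⁻ v in Ioc (0 : ℝ) 1, G v := lintegral_mono_set <| iUnion_subset fun k =>
        Ioc_subset_Ioc (by positivity) (pow_le_one₀ (by norm_num) (by norm_num))

lemma tsum_mul_le_lintegral_Ioc_lintegral_Ioc {G : ℝ → ℝ → ℝ≥0∞} {c : ℕ × ℕ → ℝ≥0∞}
    (hc : ∀ q, ∀ u ∈ Ioc ((1 / 2 : ℝ) ^ (q.1 + 1)) ((1 / 2) ^ q.1),
      ∀ v ∈ Ioc ((1 / 2 : ℝ) ^ (q.2 + 1)) ((1 / 2) ^ q.2), c q ≤ G u v) :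
    ∑' q, c q * ENNReal.ofReal ((1 / 2) ^ (q.1 + 1) * (1 / 2) ^ (q.2 + 1)) ≤
      ∫⁻ u in Ioc (0 : ℝ) 1, ∫⁻ v in Ioc (0 : ℝ) 1, G u v := by
  have hsplit (q : ℕ × ℕ) : c q * ENNReal.ofReal ((1 / 2) ^ (q.1 + 1) * (1 / 2) ^ (q.2 + 1)) =
      c q * ENNReal.ofReal ((1 / 2) ^ (q.2 + 1)) * ENNReal.ofReal ((1 / 2) ^ (q.1 + 1)) := by
    rw [ENNReal.ofReal_mul (by positivity), mul_comm (ENNReal.ofReal _), mul_assoc]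
  simp_rw [hsplit]
  rw [ENNReal.tsum_prod']
  simp_rw [ENNReal.tsum_mul_right]
  exact tsum_mul_le_lintegral_Ioc fun j u hu =>
    tsum_mul_le_lintegral_Ioc fun k v hv => hc (j, k) u hu v hv

end DyadicBlocks

section Centering

variable {E : Type*} [NormedAddCommGroup E]

lemma locallyIntegrable_comp_fst {φ : ℝ → E} (hφ : LocallyIntegrable φ) :
    LocallyIntegrable fun z : ℝ × ℝ => φ z.1 := by
  intro w
  obtain ⟨U, hU, hint⟩ := hφ w.1
  refine ⟨U ×ˢ Icc (w.2 - 1) (w.2 + 1),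
    prod_mem_nhds hU (Icc_mem_nhds (by linarith) (by linarith)), ?_⟩
  rw [IntegrableOn, Measure.volume_eq_prod, ← Measure.prod_restrict]
  exact Integrable.comp_fst hint _

lemma locallyIntegrable_comp_snd {φ : ℝ → E} (hφ : LocallyIntegrable φ) :
    LocallyIntegrable fun z : ℝ × ℝ => φ z.2 :=
  locallyIntegrable_comp_swap (locallyIntegrable_comp_fst hφ)

variable {f : ℝ → ℝ → E}

lemma locallyIntegrable_uncurry_flip (hf : LocallyIntegrable (Function.uncurry f)) :
    LocallyIntegrable (Function.uncurry (flip f)) :=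
  locallyIntegrable_comp_swap hf

lemma integrable_uncurry_prod_restrict (hf : LocallyIntegrable (Function.uncurry f))
    (a b c d : ℝ) : Integrable (Function.uncurry f)
      ((volume.restrict (Ioc a b)).prod (volume.restrict (Ioc c d))) := by
  rw [Measure.prod_restrict, ← Measure.volume_eq_prod]
  exact (hf.integrableOn_isCompact (isCompact_Icc.prod isCompact_Icc)).mono_set
    (prod_mono Ioc_subset_Icc_self Ioc_subset_Icc_self)

lemma ae_integrableOn_section (hf : LocallyIntegrable (Function.uncurry f)) (c d : ℝ) :
    ∀ᵐ x, IntegrableOn (f x) (Ioc c d) := by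
  have hunit (n : ℤ) : ∀ᵐ x ∂volume.restrict (Ioc (n : ℝ) (n + 1)),
      IntegrableOn (f x) (Ioc c d) :=
    (integrable_uncurry_prod_restrict hf n (n + 1) c d).prod_right_ae
  have hcover := (ae_restrict_iUnion_iff _ _).2 hunit
  rwa [iUnion_Ioc_intCast, Measure.restrict_univ] at hcover

variable [NormedSpace ℝ E]

/-- The mean over one period of the section `t ↦ f x t`. -/
noncomputable def fiberMean (f : ℝ → ℝ → E) (x : ℝ) : E := ∫ t in (0 : ℝ)..1, f x t

/-- The double centering of `f`: both linear means become zero, while the mixed differences are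
those of `f` because only functions of one variable are subtracted. -/
noncomputable def centered (f : ℝ → ℝ → E) (x y : ℝ) : E :=
  f x y - fiberMean f x - fiberMean (flip f) y + ∫ s in (0 : ℝ)..1, fiberMean f s

lemma locallyIntegrable_fiberMean (hf : LocallyIntegrable (Function.uncurry f)) :
    LocallyIntegrable (fiberMean f) := by
  intro x
  refine ⟨Ioc (x - 1) (x + 1), Ioc_mem_nhds (by linarith) (by linarith), ?_⟩
  have hint := (integrable_uncurry_prod_restrict hf (x - 1) (x + 1) 0 1).integral_prod_left
  exact hint.congr (.of_forall fun s => (intervalIntegral.integral_of_le zero_le_one).symm)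

lemma integral_fiberMean_flip (hf : LocallyIntegrable (Function.uncurry f)) :
    ∫ t in (0 : ℝ)..1, fiberMean (flip f) t = ∫ s in (0 : ℝ)..1, fiberMean f s := by
  simp only [fiberMean, flip, intervalIntegral.integral_of_le zero_le_one]
  exact (integral_integral_swap (integrable_uncurry_prod_restrict hf 0 1 0 1)).symm

lemma centered_flip (hf : LocallyIntegrable (Function.uncurry f)) (x y : ℝ) :
    centered (flip f) y x = centered f x y := by
  have hflip : flip (flip f) = f := rfl
  rw [centered, centered, integral_fiberMean_flip hf, hflip, sub_right_comm]
  rfl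

lemma locallyIntegrable_centered (hf : LocallyIntegrable (Function.uncurry f)) :
    LocallyIntegrable (Function.uncurry (centered f)) :=
  ((hf.sub (locallyIntegrable_comp_fst (locallyIntegrable_fiberMean hf))).sub
    (locallyIntegrable_comp_snd (locallyIntegrable_fiberMean
      (locallyIntegrable_uncurry_flip hf)))).add (locallyIntegrable_const _)

lemma ae_integral_centered_right_eq_zero [CompleteSpace E]
    (hf : LocallyIntegrable (Function.uncurry f)) :
    ∀ᵐ x, ∫ t in (0 : ℝ)..1, centered f x t = 0 := by
  have hmean : IntervalIntegrable (fiberMean (flip f)) volume 0 1 :=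
    ((locallyIntegrable_fiberMean (locallyIntegrable_uncurry_flip hf)).integrableOn_isCompact
      isCompact_uIcc).intervalIntegrable
  filter_upwards [ae_integrableOn_section hf 0 1] with x hx
  have hsec : IntervalIntegrable (f x) volume 0 1 :=
    (intervalIntegrable_iff_integrableOn_Ioc_of_le zero_le_one).2 hx
  have hsub : IntervalIntegrable (fun t => f x t - fiberMean f x) volume 0 1 :=
    hsec.sub intervalIntegrable_const
  simp only [centered]
  rw [intervalIntegral.integral_add (hsub.sub hmean) intervalIntegrable_const,
    intervalIntegral.integral_sub hsub hmean,
    intervalIntegral.integral_sub hsec intervalIntegrable_const, integral_fiberMean_flip hf]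
  simp [fiberMean]

lemma ae_integral_centered_left_eq_zero [CompleteSpace E]
    (hf : LocallyIntegrable (Function.uncurry f)) :
    ∀ᵐ y, ∫ t in (0 : ℝ)..1, centered f t y = 0 := by
  simpa only [centered_flip hf] using
    ae_integral_centered_right_eq_zero (locallyIntegrable_uncurry_flip hf)

end Centering

section MixedModulus

variable {f : ℝ → ℝ → ℝ} {p : ℝ}

lemma biPeriodic_iff : BiPeriodic f ↔ Function.Periodic (Function.uncurry f) (1, 0) ∧
    Function.Periodic (Function.uncurry f) (0, 1) := by
  simp [BiPeriodic, Function.Periodic]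

lemma biPeriodic_centered (hf : BiPeriodic f) : BiPeriodic (centered f) := by
  simp only [BiPeriodic, centered, fiberMean, flip, hf.1, hf.2, implies_true, and_self]

lemma lpNorm2_eq_eLpNorm (hf : AEStronglyMeasurable (Function.uncurry f)) (hp : 0 < p) :
    lpNorm2 p f =
      eLpNorm (Function.uncurry f) (ENNReal.ofReal p) (volume.restrict (box 1 1)) := by
  have hpow (z : ℝ × ℝ) : ‖Function.uncurry f z‖ₑ ^ p = ENNReal.ofReal (|f z.1 z.2| ^ p) := by
    rw [Real.enorm_eq_ofReal_abs, ENNReal.ofReal_rpow_of_nonneg (abs_nonneg _) hp.le]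
    rfl
  have hmeas := (hf.enorm.pow_const p).restrict (s := box 1 1)
  rw [eLpNorm_eq_lintegral_rpow_enorm_toReal (ENNReal.ofReal_pos.2 hp).ne' ENNReal.ofReal_ne_top,
    ENNReal.toReal_ofReal hp.le, lpNorm2]
  rw [volume_restrict_box] at hmeas ⊢
  rw [lintegral_prod _ hmeas, restrict_Ioc_eq_restrict_Icc]
  simp only [hpow]

lemma memLp2_mono {q : ℝ} (hp : 0 < p) (hpq : p ≤ q) (hf : MemLp2 q f) : MemLp2 p f := by
  obtain ⟨hmeas, hper, hfin⟩ := hf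
  have hmeas' : AEStronglyMeasurable (Function.uncurry f) := hmeas.aestronglyMeasurable
  refine ⟨hmeas, hper, ?_⟩
  rw [lpNorm2_eq_eLpNorm hmeas' hp]
  rw [lpNorm2_eq_eLpNorm hmeas' (hp.trans_le hpq)] at hfin
  exact (MemLp.mono_exponent ⟨hmeas'.restrict, hfin⟩ (ENNReal.ofReal_le_ofReal hpq)).2

lemma locallyIntegrable_of_memLp2_one (hf : MemLp2 1 f) :
    LocallyIntegrable (Function.uncurry f) := by
  obtain ⟨hmeas, hper, hfin⟩ := hf
  have hmeas' : AEStronglyMeasurable (Function.uncurry f) := hmeas.aestronglyMeasurable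
  rw [lpNorm2_eq_eLpNorm hmeas' one_pos, ENNReal.ofReal_one] at hfin
  exact locallyIntegrable_of_periodic (biPeriodic_iff.1 hper).1 (biPeriodic_iff.1 hper).2 hmeas'
    (memLp_one_iff_integrable.1 ⟨hmeas'.restrict, hfin⟩)

lemma memLp2_of_continuous (hf : Continuous (Function.uncurry f)) (hper : BiPeriodic f)
    (hp : 0 < p) : MemLp2 p f := by
  refine ⟨hf.measurable, hper, ?_⟩
  have hcompact := (isBounded_box 1 1).isCompact_closure
  obtain ⟨C, hC⟩ := hcompact.exists_bound_of_continuousOn hf.continuousOn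
  rw [lpNorm2_eq_eLpNorm hf.aestronglyMeasurable hp]
  refine (MemLp.of_bound hf.aestronglyMeasurable C ?_).2
  exact ae_restrict_of_forall_mem (measurableSet_box 1 1) fun z hz => hC z (subset_closure hz)

lemma mixedModulus_mono (p : ℝ) (f : ℝ → ℝ → ℝ) {u v u' v' : ℝ} (hu : u ≤ u') (hv : v ≤ v') :
    mixedModulus p f u v ≤ mixedModulus p f u' v' :=
  iSup₂_le fun s hs => iSup₂_le fun t ht =>
    le_iSup₂_of_le s ⟨hs.1, hs.2.trans hu⟩ <| le_iSup₂_of_le t ⟨ht.1, ht.2.trans hv⟩ le_rfl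

lemma mixedModulus_centered (p : ℝ) (f : ℝ → ℝ → ℝ) (u v : ℝ) :
    mixedModulus p (centered f) u v = mixedModulus p f u v := by
  have hcancel (x y s t : ℝ) : centered f (x + s) (y + t) - centered f (x + s) y
      - centered f x (y + t) + centered f x y =
        f (x + s) (y + t) - f (x + s) y - f x (y + t) + f x y := by
    simp only [centered]
    ring
  simp only [mixedModulus, hcancel]

lemma Ip_centered (p : ℝ) (f : ℝ → ℝ → ℝ) : Ip p (centered f) = Ip p f := by
  simp only [Ip, mixedModulus_centered]

lemma eLpNorm_mixedDiff_le_mixedModulus (hf : AEStronglyMeasurable (Function.uncurry f))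
    (hp : 0 < p) {s t : ℝ} (hs : 0 ≤ s) (ht : 0 ≤ t) :
    eLpNorm (mixedDiff (Function.uncurry f) s t) (ENNReal.ofReal p) (volume.restrict (box 1 1)) ≤
      mixedModulus p f s t := by
  have hcurry : mixedDiff (Function.uncurry f) s t = Function.uncurry
      fun x y => f (x + s) (y + t) - f (x + s) y - f x (y + t) + f x y := by
    ext ⟨x, y⟩
    simp [mixedDiff]
  have hmeas := aestronglyMeasurable_mixedDiff hf s t
  rw [hcurry] at hmeas ⊢
  rw [← lpNorm2_eq_eLpNorm hmeas hp]
  exact le_iSup₂_of_le s ⟨hs, le_rfl⟩ <| le_iSup₂_of_le t ⟨ht, le_rfl⟩ le_rfl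

lemma antitoneOn_rpow_neg_div_self {a : ℝ} (ha : 0 ≤ a) :
    AntitoneOn (fun r : ℝ => r ^ (-a) / r) (Ioi 0) := fun _ hr _ _ hle =>
  div_le_div₀ (Real.rpow_nonneg (le_of_lt hr) _)
    (Real.rpow_le_rpow_of_nonpos hr hle (neg_nonpos.2 ha)) hr hle

lemma four_rpow_mul_rpow_neg_div_mul {r : ℝ} (hr : 0 < r) (a : ℝ) :
    4 ^ a * ((4 * r) ^ (-a) / (4 * r) * r) = 1 / 4 * r ^ (-a) := by
  have h4 : (4 : ℝ) ^ a * 4 ^ (-a) = 1 := by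
    rw [← Real.rpow_add four_pos, add_neg_cancel, Real.rpow_zero]
  rw [Real.mul_rpow four_pos.le hr.le, div_mul_eq_mul_div, mul_div_mul_right _ _ hr.ne']
  linear_combination r ^ (-a) / 4 * h4

lemma tsum_rpow_mul_mixedModulus_le_Ip (hp : 0 ≤ p) (f : ℝ → ℝ → ℝ) :
    ∑' q : ℕ × ℕ,
        ENNReal.ofReal (1 / 4 * ((1 / 2) ^ (q.1 + 1) * (1 / 2) ^ (q.2 + 1)) ^ (-(1 / p))) *
          mixedModulus p f ((1 / 2) ^ (q.1 + 1)) ((1 / 2) ^ (q.2 + 1)) ≤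
      ENNReal.ofReal (4 ^ (1 / p)) * Ip p f := by
  let weight (r : ℝ) : ℝ := r ^ (-(1 / p)) / r
  have hscale (q : ℕ × ℕ) : (1 / 2 : ℝ) ^ q.1 * (1 / 2) ^ q.2 =
      4 * ((1 / 2) ^ (q.1 + 1) * (1 / 2) ^ (q.2 + 1)) := by ring
  have hsum := tsum_mul_le_lintegral_Ioc_lintegral_Ioc
    (G := fun u v => ENNReal.ofReal (weight (u * v)) * mixedModulus p f u v)
    (c := fun q => ENNReal.ofReal (weight ((1 / 2) ^ q.1 * (1 / 2) ^ q.2)) *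
      mixedModulus p f ((1 / 2) ^ (q.1 + 1)) ((1 / 2) ^ (q.2 + 1))) fun q u hu v hv => by
    have hu₀ : 0 < u := lt_trans (by positivity) hu.1
    have hv₀ : 0 < v := lt_trans (by positivity) hv.1
    gcongr
    · exact antitoneOn_rpow_neg_div_self (by positivity) (mul_pos hu₀ hv₀)
        (mem_Ioi.2 (by positivity)) (mul_le_mul hu.2 hv.2 hv₀.le (by positivity))
    · exact mixedModulus_mono p f hu.1.le hv.1.le
  refine le_of_eq_of_le ?_ (mul_le_mul_right hsum _)
  rw [← ENNReal.tsum_mul_left]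
  refine tsum_congr fun q => ?_
  rw [← four_rpow_mul_rpow_neg_div_mul (by positivity), ← hscale,
    ENNReal.ofReal_mul (by positivity), ENNReal.ofReal_mul' (by positivity)]
  ring

lemma exists_continuous_biPeriodic_ae_eq (hp : 1 ≤ p) (hper : BiPeriodic f)
    (hf : LocallyIntegrable (Function.uncurry f))
    (hzero₁ : ∀ᵐ x, ∫ t in (0 : ℝ)..1, f x t = 0) (hzero₂ : ∀ᵐ y, ∫ t in (0 : ℝ)..1, f t y = 0)
    (hI : Ip p f < ⊤) :
    ∃ g : ℝ → ℝ → ℝ, Continuous (Function.uncurry g) ∧ BiPeriodic g ∧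
      ∀ᵐ z : ℝ × ℝ, f z.1 z.2 = g z.1 z.2 := by
  have hp₀ : 0 < p := one_pos.trans_le hp
  obtain ⟨h₁, h₂⟩ := biPeriodic_iff.1 hper
  have hsum := ((tsum_rpow_mul_mixedModulus_le_Ip hp₀.le f).trans_lt
    (ENNReal.mul_lt_top ENNReal.ofReal_lt_top hI)).ne
  obtain ⟨G, hG, hG₁, hG₂, hfG⟩ := exists_continuous_periodic_ae_eq h₁ h₂ hf hzero₁ hzero₂ hsum
    fun q w => (enorm_steklovBlock_le h₁ h₂ hf hp q w).trans <| by
      gcongr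
      exact eLpNorm_mixedDiff_le_mixedModulus hf.aestronglyMeasurable hp₀ (by positivity)
        (by positivity)
  exact ⟨Function.curry G, hG, biPeriodic_iff.2 ⟨hG₁, hG₂⟩, hfG⟩

lemma memLp20_of_ae_eq {g : ℝ → ℝ → ℝ} (hg : MemLp2 p g)
    (hfg : ∀ᵐ z : ℝ × ℝ, f z.1 z.2 = g z.1 z.2)
    (hzero₁ : ∀ᵐ x, ∫ t in (0 : ℝ)..1, f x t = 0) (hzero₂ : ∀ᵐ y, ∫ t in (0 : ℝ)..1, f t y = 0) :
    MemLp20 p g := by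
  rw [Measure.volume_eq_prod] at hfg
  have hgf : ∀ᵐ z : ℝ × ℝ ∂volume.prod volume, f z.2 z.1 = g z.2 z.1 :=
    Measure.measurePreserving_swap.quasiMeasurePreserving.ae hfg
  refine ⟨hg, ?_, ?_⟩
  · filter_upwards [Measure.ae_ae_of_ae_prod hfg, hzero₁] with x hx hx₀
    exact (intervalIntegral.integral_congr_ae (hx.mono fun t ht _ => ht.symm)).trans hx₀
  · filter_upwards [Measure.ae_ae_of_ae_prod hgf, hzero₂] with y hy hy₀
    exact (intervalIntegral.integral_congr_ae (hy.mono fun t ht _ => ht.symm)).trans hy₀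

end MixedModulus

theorem statement1_general (p : ℝ) (hp : 1 ≤ p) (f : ℝ → ℝ → ℝ)
    (hf : MemLp2 1 f) (hI : Ip p f < ⊤) :
    ∃ (g : ℝ → ℝ → ℝ) (φ₁ φ₂ : ℝ → ℝ),
      Continuous (Function.uncurry g) ∧ MemLp20 p g ∧
      ∀ᵐ z : ℝ × ℝ ∂volume, f z.1 z.2 = g z.1 z.2 + φ₁ z.1 + φ₂ z.2 := by
  have hloc := locallyIntegrable_of_memLp2_one hf
  have hzero₁ := ae_integral_centered_right_eq_zero hloc
  have hzero₂ := ae_integral_centered_left_eq_zero hloc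
  obtain ⟨g, hg, hper, hfg⟩ := exists_continuous_biPeriodic_ae_eq hp (biPeriodic_centered hf.2.1)
    (locallyIntegrable_centered hloc) hzero₁ hzero₂ ((Ip_centered p f).trans_lt hI)
  have hgLp := memLp2_of_continuous hg hper (one_pos.trans_le hp)
  refine ⟨g, fiberMean f, fun y => fiberMean (flip f) y - ∫ s in (0 : ℝ)..1, fiberMean f s, hg,
    memLp20_of_ae_eq hgLp hfg hzero₁ hzero₂, ?_⟩
  filter_upwards [hfg] with z hz
  rw [← hz, centered]
  ring

/-- If `1 < p < ∞`, `f ∈ L^p([0,1]²)` and `I_p(f) < ∞`, then there exist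
a continuous `g ∈ L^p_0([0,1]²)` and univariate functions `φ₁, φ₂` with
`f(x,y) = g(x,y) + φ₁(x) + φ₂(y)` a.e. -/
theorem statement1 (p : ℝ) (hp : 1 < p) (f : ℝ → ℝ → ℝ)
    (hf : MemLp2 p f) (hI : Ip p f < ⊤) :
    ∃ (g : ℝ → ℝ → ℝ) (φ₁ φ₂ : ℝ → ℝ),
      Continuous (Function.uncurry g) ∧ MemLp20 p g ∧
      ∀ᵐ z : ℝ × ℝ ∂volume, f z.1 z.2 = g z.1 z.2 + φ₁ z.1 + φ₂ z.2 :=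
  statement1_general p hp.le f (memLp2_mono one_pos hp.le hf) hI
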